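/- arXiv:2106.11474 — 3 statements merged into one kernel-verified Lean document; each statement's English description precedes it below -/
import Mathlib

section
/- Let R be a commutative ring, S a multiplicative subset of R, and a ∈ R a non-zero-divisor that does not divide any element of S. Then the R-module R/aR is not S-projective, while Ext^{k}_R(R/aR, N) = 0 for every R-module N and every k ≥ 2; consequently S-pd_R(R/aR) = 1. -/
open CategoryTheory

universe u

/-- A module is uniformly `S`-torsion if a single `s ∈ S` kills it. -/
def UnifSTorsion {R : Type u} [CommRing R] (S : Submonoid R) (M : Type*) [Zero M] [SMul R M] :
    Prop :=
  ∃ s ∈ S, ∀ m : M, s • m = (0 : M)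

/-!
Multiplication by `a` gives the free resolution `0 ⟶ R ⟶ R ⟶ R/aR ⟶ 0`, so `Ext^k(R/aR, N)` vanishes
for `k ≥ 2` and is `N/aN` for `k = 1`. Taking `N = R`, an element `s` kills `Ext^1(R/aR, R) ≅ R/aR`
exactly when `a ∣ s`.
-/

open Limits Opposite Pointwise

universe v

section Homological

variable {C : Type*} [Category* C] [Abelian C]

/-- The chain complex `⋯ ⟶ 0 ⟶ X₁ ⟶ X₂` attached to a short complex `X₁ ⟶ X₂ ⟶ X₃`, with `X₂` in
degree `0`; it is a resolution of `X₃` when the short complex is short exact. -/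
noncomputable def twoTermComplex (T : ShortComplex C) : ChainComplex C ℕ :=
  ((ChainComplex.single₀ C).obj T.X₁).augment T.f zero_comp

namespace twoTermComplex

variable (T : ShortComplex C)

lemma isZero_X_add_two (n : ℕ) : IsZero ((twoTermComplex T).X (n + 2)) :=
  HomologicalComplex.isZero_single_obj_X (ComplexShape.down ℕ) 0 T.X₁ (n + 1) (by simp)

lemma exactAt_succ [Mono T.f] (n : ℕ) : (twoTermComplex T).ExactAt (n + 1) := by
  cases n with
  | zero =>
    rw [HomologicalComplex.exactAt_iff' _ 2 1 0 (by simp) (by simp),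
      ShortComplex.exact_iff_mono _ ((isZero_X_add_two T 0).eq_of_src _ _)]
    exact ‹Mono T.f›
  | succ n => exact ShortComplex.exact_of_isZero_X₂ _ (isZero_X_add_two T n)

/-- The augmentation of `⋯ ⟶ 0 ⟶ X₁ ⟶ X₂` given by `X₂ ⟶ X₃` in degree `0`. -/
noncomputable def augmentation : twoTermComplex T ⟶ (ChainComplex.single₀ C).obj T.X₃ :=
  (ChainComplex.toSingle₀Equiv _ _).symm ⟨T.g, T.zero⟩

variable {T}

lemma quasiIsoAt_augmentation_zero (hT : T.ShortExact) : QuasiIsoAt (augmentation T) 0 := by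
  rw [ChainComplex.quasiIsoAt₀_iff, ShortComplex.quasiIso_iff_of_zeros' _ rfl rfl rfl]
  have aug_zero : (augmentation T).f 0 = T.g :=
    ChainComplex.toSingle₀Equiv_symm_apply_f_zero (C := twoTermComplex T) T.g T.zero
  refine (ShortComplex.exact_and_epi_g_iff_of_iso ?_).2 ⟨hT.exact, hT.epi_g⟩
  exact ShortComplex.isoMk (Iso.refl _) (Iso.refl _) (Iso.refl _)
    ((Category.id_comp _).trans (Category.comp_id _).symm)
    ((Category.id_comp _).trans (aug_zero.symm.trans (Category.comp_id _).symm))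

lemma quasiIso_augmentation (hT : T.ShortExact) : QuasiIso (augmentation T) where
  quasiIsoAt
    | 0 => quasiIsoAt_augmentation_zero hT
    | n + 1 => by
      have := hT.mono_f
      rw [quasiIsoAt_iff_exactAt' _ _ (ChainComplex.exactAt_succ_single_obj _ _)]
      exact exactAt_succ T n

/-- A short exact sequence `0 ⟶ X₁ ⟶ X₂ ⟶ X₃ ⟶ 0` with `X₁` and `X₂` projective, seen as a
projective resolution of `X₃`. -/
noncomputable def projectiveResolution (hT : T.ShortExact) [h₁ : Projective T.X₁]
    [h₂ : Projective T.X₂] : ProjectiveResolution T.X₃ where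
  complex := twoTermComplex T
  projective
    | 0 => h₂
    | 1 => h₁
    | n + 2 => (isZero_X_add_two T n).projective
  π := augmentation T
  quasiIso := quasiIso_augmentation hT

end twoTermComplex

/-- If the differential leaving degree `j` vanishes, the homology in degree `j` is the cokernel of
the differential entering it. -/
noncomputable def homologyEquivQuotientRange {A : Type*} [Ring A] {ι : Type*} {c : ComplexShape ι}
    (K : HomologicalComplex (ModuleCat A) c) {i j k : ι} (hij : c.prev j = i) (hjk : c.next j = k)
    (hd : K.d j k = 0) : K.homology j ≃ₗ[A] K.X j ⧸ LinearMap.range (K.d i j).hom :=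
  (K.homologyIsoSc' i j k hij hjk ≪≫
    (ShortComplex.HomologyData.ofIsColimitCokernelCofork (K.sc' i j k) hd _
      (ModuleCat.cokernelIsColimit (K.d i j))).left.homologyIso).toLinearEquiv

section Ext

variable {A : Type*} [Ring A] [Linear A C] [EnoughProjectives C] {T : ShortComplex C}

lemma isZero_Ext_add_two_of_shortExact (hT : T.ShortExact) [Projective T.X₁] [Projective T.X₂]
    (n : ℕ) (Y : C) :
    IsZero (((Ext A C (n + 2)).obj (op T.X₃)).obj Y) := by
  refine IsZero.of_iso ?_ ((twoTermComplex.projectiveResolution hT).isoExt (n + 2) Y)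
  have no_morphisms : Subsingleton ((twoTermComplex T).X (n + 2) ⟶ Y) :=
    ⟨(twoTermComplex.isZero_X_add_two T n).eq_of_src⟩
  have degree_isZero : IsZero (((twoTermComplex T).linearYonedaObj A Y).X (n + 2)) :=
    ModuleCat.isZero_of_iff_subsingleton.2 no_morphisms
  exact HomologicalComplex.ExactAt.isZero_homology
    (ShortComplex.exact_of_isZero_X₂ _ degree_isZero)

/-- The first `Ext` of the cokernel `X₃` of a monomorphism `f : X₁ ⟶ X₂` between projectives: the
morphisms `X₁ ⟶ Y`, modulo those which extend along `f`. -/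
noncomputable def extOneEquivOfShortExact (hT : T.ShortExact) [Projective T.X₁] [Projective T.X₂]
    (Y : C) : ((Ext A C 1).obj (op T.X₃)).obj Y ≃ₗ[A]
      (T.X₁ ⟶ Y) ⧸ LinearMap.range (Linear.leftComp A Y T.f) :=
  ((twoTermComplex.projectiveResolution hT).isoExt 1 Y).toLinearEquiv ≪≫ₗ
    homologyEquivQuotientRange ((twoTermComplex T).linearYonedaObj A Y) (i := 0) (k := 2)
      (by simp) (by simp) (by
        ext (g : (twoTermComplex T).X 1 ⟶ Y)
        exact (twoTermComplex.isZero_X_add_two T 0).eq_of_src _ _)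

end Ext

end Homological

section SMulShortComplex

variable {R : Type u} [CommRing R] (P : ModuleCat.{v} R) [hP : Projective P] (a : R)

instance : Projective (P.smulShortComplex a).X₁ := hP

instance : Projective (P.smulShortComplex a).X₂ := hP

end SMulShortComplex

section Quotient

variable {R : Type u} [CommRing R]

lemma range_leftComp_smul_id {C : Type*} [Category* C] [Preadditive C] [Linear R C] (a : R)
    (X Y : C) : LinearMap.range (Linear.leftComp R Y (a • 𝟙 X)) = a • ⊤ := by
  ext f
  simp [Submodule.mem_smul_pointwise_iff_exists]

/-- `R/aR`, as the cokernel of multiplication by `a` on `R`. -/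
noncomputable def quotientSpanSingletonIso (a : R) :
    ModuleCat.of R (R ⧸ Ideal.span {a}) ≅ ((ModuleCat.of R R).smulShortComplex a).X₃ :=
  (Submodule.quotEquivOfEq _ _
    (by rw [← Submodule.ideal_span_singleton_smul, smul_eq_mul, Ideal.mul_top])).toModuleIso

variable {a : R}

lemma isZero_Ext_add_two_quotient_span_singleton (ha : IsSMulRegular R a) (n : ℕ)
    (N : ModuleCat.{u} R) :
    IsZero (((Ext R (ModuleCat.{u} R) (n + 2)).obj
      (op (ModuleCat.of R (R ⧸ Ideal.span {a})))).obj N) :=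
  (isZero_Ext_add_two_of_shortExact ha.smulShortComplex_shortExact n N).of_iso
    (((Ext R (ModuleCat.{u} R) (n + 2)).mapIso (quotientSpanSingletonIso a).symm.op).app N)

/-- `Ext¹(R/aR, N) ≅ N/aN` for a non-zero-divisor `a`: the morphisms `R ⟶ N` are the elements of
`N`, and those extending along multiplication by `a` are the multiples of `a`. -/
noncomputable def extOneQuotientSpanSingletonEquiv (ha : IsSMulRegular R a) (N : ModuleCat.{u} R) :
    ((Ext R (ModuleCat.{u} R) 1).obj (op (ModuleCat.of R (R ⧸ Ideal.span {a})))).obj N ≃ₗ[R]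
      QuotSMulTop a N :=
  (((Ext R (ModuleCat.{u} R) 1).mapIso (quotientSpanSingletonIso a).symm.op).app N).toLinearEquiv
    ≪≫ₗ extOneEquivOfShortExact ha.smulShortComplex_shortExact N
    ≪≫ₗ Submodule.quotEquivOfEq _ _ (range_leftComp_smul_id a _ N)
    ≪≫ₗ QuotSMulTop.congr a (ModuleCat.homLinearEquiv ≪≫ₗ LinearMap.ringLmapEquivSelf R R N)

end Quotient

section UnifSTorsion

variable {R : Type u} [CommRing R] {S : Submonoid R}

lemma UnifSTorsion.of_surjective {M N : Type*} [AddCommMonoid M] [Module R M] [AddCommMonoid N]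
    [Module R N] (hM : UnifSTorsion S M) {f : M →ₗ[R] N} (hf : Function.Surjective f) :
    UnifSTorsion S N := by
  obtain ⟨s, hs, hsM⟩ := hM
  refine ⟨s, hs, hf.forall.2 fun m => ?_⟩
  rw [← map_smul, hsM, map_zero]

lemma unifSTorsion_quotSMulTop_self_iff {a : R} :
    UnifSTorsion S (QuotSMulTop a R) ↔ ∃ s ∈ S, a ∣ s := by
  have smul_mk_eq_zero (s r : R) :
      s • (Submodule.Quotient.mk r : QuotSMulTop a R) = 0 ↔ a ∣ s * r := by
    rw [← Submodule.Quotient.mk_smul, Submodule.Quotient.mk_eq_zero]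
    simp [Submodule.mem_smul_pointwise_iff_exists, dvd_def, eq_comm]
  refine exists_congr fun s => and_congr_right fun _ => ?_
  rw [(Submodule.Quotient.mk_surjective _).forall]
  simp only [smul_mk_eq_zero]
  exact ⟨fun h => by simpa using h 1, fun h r => h.mul_right r⟩

end UnifSTorsion

/-- If `a` is a non-zero-divisor of `R` which divides no element of `S`, then `R/aR` is not
`S`-projective (its first Ext is not uniformly `S`-torsion against all modules), while
`Ext^k_R(R/aR, N) = 0` for all `N` and `k ≥ 2`; hence `S`-pd`_R(R/aR) = 1`. -/
theorem stmt15 {R : Type u} [CommRing R] (S : Submonoid R) (a : R)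
    (ha : a ∈ nonZeroDivisors R) (hdvd : ∀ s ∈ S, ¬ a ∣ s) :
    (¬ ∀ N : ModuleCat.{u} R,
        UnifSTorsion S (((Ext R (ModuleCat.{u} R) 1).obj
          (Opposite.op (ModuleCat.of R (R ⧸ Ideal.span {a})))).obj N)) ∧
      ∀ k : ℕ, 2 ≤ k → ∀ N : ModuleCat.{u} R,
        ∀ x : ((Ext R (ModuleCat.{u} R) k).obj
          (Opposite.op (ModuleCat.of R (R ⧸ Ideal.span {a})))).obj N, x = 0 := by
  have hreg : IsSMulRegular R a := (isRegular_iff_mem_nonZeroDivisors.2 ha).left.isSMulRegular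
  refine ⟨fun h => ?_, fun k hk N x => ?_⟩
  · have quotient_torsion : UnifSTorsion S (QuotSMulTop a R) :=
      (h (ModuleCat.of R R)).of_surjective (extOneQuotientSpanSingletonEquiv hreg _).surjective
    obtain ⟨s, hs, has⟩ := unifSTorsion_quotSMulTop_self_iff.1 quotient_torsion
    exact hdvd s hs has
  · obtain ⟨n, rfl⟩ := Nat.exists_eq_add_of_le' hk
    have := ModuleCat.subsingleton_of_isZero (isZero_Ext_add_two_quotient_span_singleton hreg n N)
    exact Subsingleton.elim x 0
end

section
/- Let θ : R → T be a homomorphism of commutative rings, S a multiplicative subset of R, and θ(S) its image, a multiplicative subset of T. Let M be a T-module and m, k ≥ 0 integers. Suppose that Ext^{m+1}_T(M, N) is uniformly θ(S)-torsion for every T-module N, and that Ext^{k+1}_R(T, N) is uniformly S-torsion for every R-module N (T regarded as an R-module via θ). Then Ext^{m+k+1}_R(M, N) is uniformly S-torsion for every R-module N, where M is regarded as an R-module by restriction of scalars along θ. (That is, S-pd_R(M) ≤ θ(S)-pd_T(M) + S-pd_R(T).) -/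
open CategoryTheory

universe u

/-!
Projective `T`-modules are retracts of coproducts of copies of `T`, and a scalar killing
`Ext (T, N)` kills `Ext (∐ T, N)`, so every projective `T`-module has `S`-projective dimension at
most `k` over `R`. Let `0 ⟶ L ⟶ P ⟶ M ⟶ 0` be exact with `P` projective over `T`. If `m = 0`, some
`θ s • 𝟙 M` lifts through `P`, and `M` inherits the bound of `P` at the cost of the factor `s`.
Otherwise `L` has `θ(S)`-projective dimension at most `m - 1`, and the long exact `Ext` sequence
over `R` passes from the bounds `m - 1 + k` for `L` and `k` for `P` to the bound `m + k` for `M`.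
-/

section UniformTorsion

variable {A : Type*} [CommSemiring A] {S : Submonoid A} {X Y Z : Type*} [AddCommMonoid X]
  [AddCommMonoid Y] [AddCommMonoid Z] [Module A X] [Module A Y] [Module A Z]

variable (S X) in
/-- An `A`-module is uniformly `S`-torsion if a single element of `S` annihilates it. -/
def IsUniformlyTorsion : Prop :=
  ∃ s ∈ S, Module.IsTorsionBy A X s

namespace IsUniformlyTorsion

lemma of_subsingleton [Subsingleton X] : IsUniformlyTorsion S X :=
  ⟨1, S.one_mem, fun _ ↦ Subsingleton.elim _ _⟩

lemma of_injective {f : X →ₗ[A] Y} (hf : Function.Injective f) (hY : IsUniformlyTorsion S Y) :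
    IsUniformlyTorsion S X := by
  obtain ⟨s, hs, hsY⟩ := hY
  exact ⟨s, hs, fun x ↦ hf (by rw [map_smul, map_zero, hsY])⟩

lemma of_exact {f : X →ₗ[A] Y} {g : Y →ₗ[A] Z} (hfg : Function.Exact f g)
    (hX : IsUniformlyTorsion S X) (hZ : IsUniformlyTorsion S Z) : IsUniformlyTorsion S Y := by
  obtain ⟨s, hs, hsX⟩ := hX
  obtain ⟨t, ht, htZ⟩ := hZ
  refine ⟨s * t, S.mul_mem hs ht, fun y ↦ ?_⟩
  obtain ⟨x, hx⟩ := (hfg (t • y)).1 (by rw [map_smul, htZ])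
  rw [mul_smul, ← hx, ← map_smul, hsX, map_zero]

end IsUniformlyTorsion

lemma isUniformlyTorsion_iff_of_linearEquiv (e : X ≃ₗ[A] Y) :
    IsUniformlyTorsion S X ↔ IsUniformlyTorsion S Y :=
  ⟨.of_injective (f := e.symm.toLinearMap) e.symm.injective,
    .of_injective (f := e.toLinearMap) e.injective⟩

end UniformTorsion

section AbelianCategory

open Limits Abelian

universe w w' v v' t t'

variable {C : Type t} [Category.{v} C] [Abelian C]

section DerivedExt

variable {A : Type*} [CommRing A] [Linear A C]

/-- The class in `Ext` of a cocycle of the complex `Hom(P, Y)`, where `P` is a projective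
resolution, as a linear map. -/
noncomputable def extMkLinearMap [HasExt.{w} C] {X : C} (P : ProjectiveResolution X) (Y : C)
    (n : ℕ) : LinearMap.ker (Linear.leftComp A Y (P.complex.d (n + 1) n)) →ₗ[A] Ext.{w} X Y n where
  toFun f := P.extMk f.1 (n + 1) rfl f.2
  map_add' f g := (P.add_extMk f.1 g.1 (n + 1) rfl f.2 g.2).symm
  map_smul' a f := by
    have h := P.extMk_comp_mk₀ f.1 (n + 1) rfl f.2 (a • 𝟙 Y)
    simp only [Linear.comp_smul, Category.comp_id] at h
    exact h.symm.trans (Ext.smul_eq_comp_mk₀ _ _).symm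

lemma extMkLinearMap_surjective [HasExt.{w} C] {X : C} (P : ProjectiveResolution X) (Y : C)
    (n : ℕ) : Function.Surjective (extMkLinearMap (A := A) P Y n : _ → Ext.{w} X Y n) := fun x ↦ by
  obtain ⟨f, hf, rfl⟩ := P.extMk_surjective x (n + 1) rfl
  exact ⟨⟨f, hf⟩, rfl⟩

/-- The `Ext` modules derived from the functor `Hom` agree, in positive degrees, with the `Ext`
modules of the derived category, for which the long exact sequences are available. -/
noncomputable def extLinearEquivAbelianExt [EnoughProjectives C] [HasExt.{w} C] (X Y : C) (n : ℕ) :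
    ((_root_.Ext A C (n + 1)).obj (Opposite.op X)).obj Y ≃ₗ[A] Abelian.Ext.{w} X Y (n + 1) :=
  let P := ProjectiveResolution.of X
  let K := P.complex.linearYonedaObj A Y
  let K' := K.sc' n (n + 1) (n + 2)
  (P.isoExt (R := A) (n + 1) Y ≪≫
      ShortComplex.homologyMapIso (K.isoSc' n (n + 1) (n + 2) (by simp) (by simp)) ≪≫
      K'.moduleCatHomologyIso).toLinearEquiv ≪≫ₗ
    Submodule.quotEquivOfEq _ (LinearMap.ker (extMkLinearMap P Y (n + 1))) (by
      ext f
      refine Iff.trans ?_ (P.extMk_eq_zero_iff f.1 (n + 2) rfl f.2 n rfl).symm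
      exact exists_congr fun g ↦ Subtype.ext_iff) ≪≫ₗ
    (extMkLinearMap P Y (n + 1)).quotKerEquivOfSurjective (extMkLinearMap_surjective P Y (n + 1))

end DerivedExt

section Coproduct

variable [HasExt.{w} C] [EnoughInjectives C] {J : Type*} {X : J → C} {c : Cofan X}

lemma exists_mk₀_inj_comp_eq (hc : IsColimit c) {N : C} {n : ℕ} (x : ∀ j, Ext.{w} (X j) N n) :
    ∃ y : Ext.{w} c.pt N n, ∀ j, (Ext.mk₀ (c.inj j)).comp y (zero_add n) = x j := by
  induction n generalizing N with
  | zero =>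
    refine ⟨Ext.mk₀ (Cofan.IsColimit.desc hc fun j ↦ Ext.addEquiv₀ (x j)), fun j ↦ ?_⟩
    rw [Ext.mk₀_comp_mk₀, Cofan.IsColimit.fac, Ext.mk₀_addEquiv₀_apply]
  | succ n ih =>
    let I := (EnoughInjectives.presentation N).some
    have hI := I.shortExact_shortComplex
    choose x' hx' using fun j ↦ Ext.covariant_sequence_exact₁ (X j) hI (x j)
      (Ext.eq_zero_of_injective _) rfl
    obtain ⟨y', hy'⟩ := ih x'
    refine ⟨y'.comp hI.extClass rfl, fun j ↦ ?_⟩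
    rw [← Ext.comp_assoc _ _ _ (zero_add n) rfl (by lia), hy', hx']

/- The degree `n + 1` case needs joint surjectivity in degree `n`, to subtract from a lift of `x`
along the connecting map a class coming from the injective middle term. -/
lemma eq_zero_of_mk₀_inj_comp_eq_zero (hc : IsColimit c) {N : C} {n : ℕ} {x : Ext.{w} c.pt N n}
    (hx : ∀ j, (Ext.mk₀ (c.inj j)).comp x (zero_add n) = 0) : x = 0 := by
  induction n generalizing N with
  | zero =>
    obtain ⟨f, rfl⟩ := (Ext.mk₀_bijective _ _).2 x
    refine Ext.mk₀_eq_zero_iff _ |>.2 (Cofan.IsColimit.hom_ext hc _ _ fun j ↦ ?_)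
    rw [comp_zero, ← Ext.mk₀_eq_zero_iff, ← Ext.mk₀_comp_mk₀, hx]
  | succ n ih =>
    let I := (EnoughInjectives.presentation N).some
    have hI := I.shortExact_shortComplex
    obtain ⟨y, rfl⟩ := Ext.covariant_sequence_exact₁ _ hI x (Ext.eq_zero_of_injective _) rfl
    have hyj j : ∃ u : Ext.{w} (X j) I.J n, u.comp (Ext.mk₀ I.shortComplex.g) (add_zero n) =
        (Ext.mk₀ (c.inj j)).comp y (zero_add n) :=
      Ext.covariant_sequence_exact₃ (X j) hI _ rfl
        ((Ext.comp_assoc _ _ _ (zero_add n) rfl (by lia)).trans (hx j))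
    choose u hu using hyj
    obtain ⟨v, hv⟩ := exists_mk₀_inj_comp_eq hc u
    have hyv : y - v.comp (Ext.mk₀ I.shortComplex.g) (add_zero n) = 0 := ih fun j ↦ by
      rw [sub_eq_add_neg, Ext.comp_add, Ext.comp_neg,
        ← Ext.comp_assoc _ _ _ (zero_add n) (add_zero n) (by lia), hv, hu, add_neg_cancel]
    rw [sub_eq_zero.1 hyv, Ext.comp_assoc_of_second_deg_zero, hI.comp_extClass, Ext.comp_zero]

lemma isTorsionBy_ext_of_isColimit_cofan {A : Type*} [CommRing A] [Linear A C]
    (hc : IsColimit c) {N : C} {n : ℕ} {s : A}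
    (h : ∀ j, Module.IsTorsionBy A (Ext.{w} (X j) N n) s) :
    Module.IsTorsionBy A (Ext.{w} c.pt N n) s := fun x ↦
  eq_zero_of_mk₀_inj_comp_eq_zero hc fun j ↦ by rw [Ext.comp_smul, h]

end Coproduct

section UniformProjectiveDimension

variable {A : Type*} [CommRing A] [Linear A C] [HasExt.{w} C] {S : Submonoid A}

variable (S) in
/-- `S`-pd(X) ≤ n, expressed by the `Ext` criterion: every `Ext^{n+1}(X, N)` is uniformly
`S`-torsion. The annihilating element of `S` may depend on `N`. -/
def HasUniformProjectiveDimensionLE (X : C) (n : ℕ) : Prop :=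
  ∀ N : C, IsUniformlyTorsion S (Ext.{w} X N (n + 1))

lemma hasUniformProjectiveDimensionLE_iff_ext [EnoughProjectives C] {X : C} {n : ℕ} :
    HasUniformProjectiveDimensionLE.{w} S X n ↔
      ∀ N : C, IsUniformlyTorsion S (((_root_.Ext A C (n + 1)).obj (Opposite.op X)).obj N) :=
  forall_congr' fun N ↦
    (isUniformlyTorsion_iff_of_linearEquiv (extLinearEquivAbelianExt X N n)).symm

namespace HasUniformProjectiveDimensionLE

lemma of_comp_eq_smul_id {X Y : C} {n : ℕ} {s : A} (hs : s ∈ S) {i : X ⟶ Y} {p : Y ⟶ X}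
    (hip : i ≫ p = s • 𝟙 X) (hY : HasUniformProjectiveDimensionLE.{w} S Y n) :
    HasUniformProjectiveDimensionLE.{w} S X n := fun N ↦ by
  obtain ⟨t, ht, htY⟩ := hY N
  refine ⟨t * s, S.mul_mem ht hs, fun x ↦ ?_⟩
  have hsx : s • x = (Ext.mk₀ i).comp ((Ext.mk₀ p).comp x (zero_add _)) (zero_add _) := by
    rw [Ext.mk₀_comp_mk₀_assoc, hip, Ext.mk₀_smul, Ext.smul_comp, Ext.mk₀_id_comp]
  rw [mul_smul, hsx, ← Ext.comp_smul, htY, Ext.comp_zero]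

lemma of_retract {X Y : C} {n : ℕ} (r : Retract X Y)
    (hY : HasUniformProjectiveDimensionLE.{w} S Y n) : HasUniformProjectiveDimensionLE.{w} S X n :=
  hY.of_comp_eq_smul_id S.one_mem (r.retract.trans (one_smul A _).symm)

lemma mono [EnoughInjectives C] {X : C} {m n : ℕ} (hX : HasUniformProjectiveDimensionLE.{w} S X m)
    (hmn : m ≤ n) : HasUniformProjectiveDimensionLE.{w} S X n := by
  induction n, hmn using Nat.le_induction with
  | base => exact hX
  | succ n _ ih =>
    intro N
    let I := (EnoughInjectives.presentation N).some
    have hexact := (ShortComplex.ab_exact_iff_function_exact _).1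
      (Ext.covariant_sequence_exact₁' X I.shortExact_shortComplex (n + 1) (n + 2) rfl)
    have := Ext.subsingleton_of_injective.{w} X I.J (n + 1)
    exact .of_exact (f := Ext.postcompOfLinear _ A X rfl)
      (g := (Ext.mk₀ I.f).postcompOfLinear A X (add_zero _)) hexact (ih _) .of_subsingleton

lemma of_isColimit_cofan [EnoughInjectives C] {X : C} {n : ℕ} {J : Type*}
    {c : Cofan fun _ : J ↦ X} (hc : IsColimit c) (hX : HasUniformProjectiveDimensionLE.{w} S X n) :
    HasUniformProjectiveDimensionLE.{w} S c.pt n := fun N ↦ by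
  obtain ⟨s, hs, hsX⟩ := hX N
  exact ⟨s, hs, isTorsionBy_ext_of_isColimit_cofan hc fun _ ↦ hsX⟩

variable {K : ShortComplex C} {n : ℕ}

lemma X₁_of_projective (hK : K.ShortExact) [Projective K.X₂]
    (h₃ : HasUniformProjectiveDimensionLE.{w} S K.X₃ (n + 1)) :
    HasUniformProjectiveDimensionLE.{w} S K.X₁ n := fun N ↦
  have := Ext.subsingleton_of_projective.{w} K.X₂ N n
  .of_exact (f := (Ext.mk₀ K.f).precompOfLinear A N (zero_add _))
    (g := hK.extClass.precompOfLinear A N (add_comm 1 (n + 1)))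
    ((ShortComplex.ab_exact_iff_function_exact _).1
      (Ext.contravariant_sequence_exact₁' hK N (n + 1) (n + 2) (add_comm 1 (n + 1))))
    .of_subsingleton (h₃ N)

lemma X₃_of_shortExact (hK : K.ShortExact)
    (h₁ : HasUniformProjectiveDimensionLE.{w} S K.X₁ n)
    (h₂ : HasUniformProjectiveDimensionLE.{w} S K.X₂ (n + 1)) :
    HasUniformProjectiveDimensionLE.{w} S K.X₃ (n + 1) := fun N ↦
  .of_exact (f := hK.extClass.precompOfLinear A N (add_comm 1 (n + 1)))
    (g := (Ext.mk₀ K.g).precompOfLinear A N (zero_add _))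
    ((ShortComplex.ab_exact_iff_function_exact _).1
      (Ext.contravariant_sequence_exact₃' hK N (n + 1) (n + 2) (add_comm 1 (n + 1))))
    (h₁ N) (h₂ N)

lemma exists_comp_eq_smul_id (hK : K.ShortExact)
    (h₃ : HasUniformProjectiveDimensionLE.{w} S K.X₃ 0) :
    ∃ s ∈ S, ∃ i : K.X₃ ⟶ K.X₂, i ≫ K.g = s • 𝟙 K.X₃ := by
  obtain ⟨s, hs, hs₃⟩ := h₃ K.X₁
  obtain ⟨y, hy⟩ := Ext.covariant_sequence_exact₃ K.X₃ hK (Ext.mk₀ (s • 𝟙 K.X₃)) (zero_add 1)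
    (by rw [Ext.mk₀_smul, Ext.smul_comp, hs₃])
  obtain ⟨i, rfl⟩ := (Ext.mk₀_bijective _ _).2 y
  exact ⟨s, hs, i, (Ext.mk₀_bijective _ _).1 (by rw [← hy, Ext.mk₀_comp_mk₀])⟩

end HasUniformProjectiveDimensionLE

end UniformProjectiveDimension

section ChangeOfCategory

variable {D : Type t'} [Category.{v'} D] [HasExt.{w} C] [EnoughInjectives C]
  {A : Type*} [CommRing A] [Linear A C] {S : Submonoid A}

namespace HasUniformProjectiveDimensionLE

lemma functorObj_of_projective {F : D ⥤ C} {G : D} (hG : IsSeparator G) [HasCoproducts.{v'} D]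
    [∀ J : Type v', PreservesColimitsOfShape (Discrete J) F] {k : ℕ}
    (hFG : HasUniformProjectiveDimensionLE.{w} S (F.obj G) k) (P : D) [Projective P] :
    HasUniformProjectiveDimensionLE.{w} S (F.obj P) k := by
  let p : (∐ fun _ : G ⟶ P ↦ G) ⟶ P := Sigma.desc fun f ↦ f
  have : Epi p := (isSeparator_iff_epi G).1 hG P
  let r : Retract P (∐ fun _ : G ⟶ P ↦ G) :=
    ⟨Projective.factorThru (𝟙 P) p, p, Projective.factorThru_comp _ _⟩
  exact .of_retract (r.map F)
    (hFG.of_isColimit_cofan (isColimitOfHasCoproductOfPreservesColimit F fun _ ↦ G))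

theorem functorObj_add [Abelian D] [HasExt.{w'} D] [EnoughProjectives D]
    {B : Type*} [CommRing B] [Linear B D] {θ : A →+* B}
    {F : D ⥤ C} [F.Additive] [PreservesFiniteLimits F] [PreservesFiniteColimits F]
    (hF : ∀ {X Y : D} (a : A) (f : X ⟶ Y), F.map (θ a • f) = a • F.map f) {k : ℕ}
    (hP : ∀ (P : D) [Projective P], HasUniformProjectiveDimensionLE.{w} S (F.obj P) k)
    {X : D} {m : ℕ} (hX : HasUniformProjectiveDimensionLE.{w'} (S.map θ) X m) :
    HasUniformProjectiveDimensionLE.{w} S (F.obj X) (m + k) := by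
  induction m generalizing X with
  | zero =>
    obtain ⟨_, ⟨s, hs, rfl⟩, i, hi⟩ := hX.exists_comp_eq_smul_id
      { exact := ShortComplex.exact_kernel (Projective.π X) }
    have hFi : F.map i ≫ F.map (Projective.π X) = s • 𝟙 (F.obj X) :=
      calc
        _ = F.map (θ s • 𝟙 X) := by rw [← F.map_comp, hi]
        _ = s • 𝟙 (F.obj X) := by rw [hF, F.map_id]
    rw [zero_add]
    exact (hP _).of_comp_eq_smul_id hs hFi
  | succ m ih =>
    let K := ShortComplex.mk _ _ (kernel.condition (Projective.π X))
    have hK : K.ShortExact := { exact := ShortComplex.exact_kernel _ }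
    have : Projective K.X₂ := Projective.projective_over X
    rw [Nat.succ_add]
    exact X₃_of_shortExact (hK.map_of_exact F) (ih (hX.X₁_of_projective hK))
      ((hP K.X₂).mono (by lia))

end HasUniformProjectiveDimensionLE

end ChangeOfCategory

end AbelianCategory

section Modules

universe v

/-- An `R`-module structure on a `T`-module that factors through `θ` is the one obtained by
restriction of scalars along `θ`. -/
noncomputable def isoRestrictScalarsOfSMulEq {R T : Type*} [Ring R] [Ring T] {θ : R →+* T}
    {M : Type v} [AddCommGroup M] [Module T M] [Module R M]
    (hM : ∀ (r : R) (x : M), r • x = θ r • x) :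
    ModuleCat.of R M ≅ (ModuleCat.restrictScalars θ).obj (ModuleCat.of T M) :=
  (show M ≃ₗ[R] (ModuleCat.restrictScalars θ).obj (ModuleCat.of T M) from
    { AddEquiv.refl M with map_smul' := hM }).toModuleIso

theorem HasUniformProjectiveDimensionLE.restrictScalars {R : Type*} {T : Type v} [CommRing R]
    [CommRing T] [Small.{v} R] {θ : R →+* T} {S : Submonoid R} {M : ModuleCat.{v} T} {m k : ℕ}
    (hM : HasUniformProjectiveDimensionLE.{v} (S.map θ) M m)
    (hT : HasUniformProjectiveDimensionLE.{v} S
      ((ModuleCat.restrictScalars θ).obj (ModuleCat.of T T)) k) :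
    HasUniformProjectiveDimensionLE.{v} S ((ModuleCat.restrictScalars θ).obj M) (m + k) :=
  let e := (ModuleCat.restrictScalars θ).mapIso (Shrink.linearEquiv T T).toModuleIso
  hM.functorObj_add (fun _ _ ↦ rfl) fun P _ ↦
    (hT.of_retract e.retract).functorObj_of_projective (ModuleCat.isSeparator T) P

end Modules

/-- Change of rings: if `θ : R → T`, `M` is a `T`-module with `Ext^{m+1}_T(M, -)` uniformly
`θ(S)`-torsion, and the `R`-module `T` has `Ext^{k+1}_R(T, -)` uniformly `S`-torsion, then
`Ext^{m+k+1}_R(M, -)` is uniformly `S`-torsion (`M`, `T` viewed as `R`-modules via `θ`).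
That is, `S`-pd_R(M) ≤ `θ(S)`-pd_T(M) + `S`-pd_R(T). -/
theorem stmt16 {R T : Type u} [CommRing R] [CommRing T] (θ : R →+* T) (S : Submonoid R)
    [Module R T] (hTs : ∀ (r : R) (t : T), r • t = θ r * t)
    (M : Type u) [AddCommGroup M] [Module T M] [Module R M]
    (hMs : ∀ (r : R) (x : M), r • x = θ r • x)
    (m k : ℕ)
    (h1 : ∀ N : ModuleCat.{u} T, ∃ s ∈ S,
      ∀ x : ((Ext T (ModuleCat.{u} T) (m + 1)).obj (Opposite.op (ModuleCat.of T M))).obj N,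
        θ s • x = 0)
    (h2 : ∀ N : ModuleCat.{u} R, ∃ s ∈ S,
      ∀ x : ((Ext R (ModuleCat.{u} R) (k + 1)).obj (Opposite.op (ModuleCat.of R T))).obj N,
        s • x = 0) :
    ∀ N : ModuleCat.{u} R, ∃ s ∈ S,
      ∀ x : ((Ext R (ModuleCat.{u} R) (m + k + 1)).obj
          (Opposite.op (ModuleCat.of R M))).obj N,
        s • x = 0 := by
  have hM : HasUniformProjectiveDimensionLE.{u} (S.map θ) (ModuleCat.of T M) m :=
    hasUniformProjectiveDimensionLE_iff_ext.2 fun N ↦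
      let ⟨s, hs, hsN⟩ := h1 N
      ⟨θ s, Submonoid.mem_map_of_mem θ hs, fun x ↦ hsN x⟩
  have hT : HasUniformProjectiveDimensionLE.{u} S (ModuleCat.of R T) k :=
    hasUniformProjectiveDimensionLE_iff_ext.2 fun N ↦
      let ⟨s, hs, hsN⟩ := h2 N
      ⟨s, hs, fun x ↦ hsN x⟩
  have hRM : HasUniformProjectiveDimensionLE.{u} S (ModuleCat.of R M) (m + k) :=
    (hM.restrictScalars (hT.of_retract (isoRestrictScalarsOfSMulEq hTs).symm.retract)).of_retract
      (isoRestrictScalarsOfSMulEq hMs).retract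
  intro N
  obtain ⟨s, hs, hsN⟩ := hasUniformProjectiveDimensionLE_iff_ext.1 hRM N
  exact ⟨s, hs, fun x ↦ @hsN x⟩
end

section
/- Let R be a commutative ring, S a multiplicative subset of R, viewed also as a multiplicative subset of the polynomial ring R[x] via the constant embedding. If P is an R[x]-module that is S-projective over R[x] (i.e., Ext^1_{R[x]}(P, N) is uniformly S-torsion for every R[x]-module N), then P, regarded as an R-module by restriction of scalars, is S-projective over R (i.e., Ext^1_R(P, N) is uniformly S-torsion for every R-module N). -/
open CategoryTheory

universe u

/-!
If `A` is an `R`-algebra which is projective as an `R`-module, such as `R[x]`, then `Hom_R(A, -)`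
is exact, so its left adjoint, restriction of scalars, preserves projectives. Being exact too, it
turns a projective resolution `Q → M` over `A` into one over `R`. The adjunction identifies
`Hom_A(Q, Hom_R(A, N))` with `Hom_R(Q, N)`, whence `Ext_A^n(M, Hom_R(A, N)) ≅ Ext_R^n(M, N)`, and
an element of `R` annihilating the left side annihilates the right side.
-/

section ChangeOfRings

open ModuleCat

section Ring

universe v w

variable {R : Type u} {A : Type v}

lemma preservesEpimorphisms_coextendScalars [Ring R] [Ring A] (φ : R →+* A)
    [Module.Projective R ((restrictScalars φ).obj (of A A))] :
    (coextendScalars.{u, v, w} φ).PreservesEpimorphisms where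
  preserves g hg := by
    rw [ModuleCat.epi_iff_surjective] at hg ⊢
    exact fun h ↦ Module.projective_lifting_property g.hom h hg

variable (R A) [CommRing R] [Ring A] [Algebra R A]

/-- A module over an `R`-algebra `A`, considered as an `R`-module, is the restriction of scalars
along `algebraMap R A`. The `R`-actions on the two sides agree only propositionally, so this is an
isomorphism rather than an equality. -/
def restrictScalarsAlgebraMapIso (M : Type w) [AddCommGroup M] [Module A M] [Module R M]
    [IsScalarTower R A M] :
    (restrictScalars (algebraMap R A)).obj (of A M) ≅ of R M :=
  LinearEquiv.toModuleIso <|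
    show (restrictScalars (algebraMap R A)).obj (of A M) ≃ₗ[R] M from
      { AddEquiv.refl M with map_smul' := algebraMap_smul A (M := M) }

lemma preservesProjectiveObjects_restrictScalars_algebraMap [Module.Projective R A] :
    (restrictScalars.{max w v} (algebraMap R A)).PreservesProjectiveObjects := by
  have : Module.Projective R ((restrictScalars (algebraMap R A)).obj (of A A)) :=
    .of_equiv' (restrictScalarsAlgebraMapIso R A A).symm.toLinearEquiv
  have := preservesEpimorphisms_coextendScalars.{u, v, max w v} (algebraMap R A)
  exact Functor.preservesProjectiveObjects_of_adjunction_of_preservesEpimorphisms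
    (restrictCoextendScalarsAdj.{w, u, v} (algebraMap R A))

end Ring

section CommRing

variable {R A : Type u} [CommRing R] [CommRing A] (φ : R →+* A)

/-- The adjunction between restriction and coextension of scalars along `φ : R →+* A`, as an
`R`-linear equivalence `Hom_A(M, Hom_R(A, N)) ≃ Hom_R(M, N)`. -/
noncomputable def homCoextendScalarsLinearEquiv (M : ModuleCat.{u} A) (N : ModuleCat.{u} R) :
    (restrictScalars φ).obj (of A (M ⟶ (coextendScalars φ).obj N)) ≃ₗ[R]
      ((restrictScalars φ).obj M ⟶ N) where
  __ := ((restrictCoextendScalarsAdj.{u} φ).homAddEquiv M N).symm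
  map_smul' r f := by
    let g : (restrictScalars φ).obj M ⟶ N :=
      ((restrictCoextendScalarsAdj.{u} φ).homAddEquiv M N).symm f
    ext x
    have map_smul_left : φ r • f.hom x = f.hom (φ r • (x : M)) := (f.hom.map_smul (φ r) x).symm
    change CoextendScalars.equiv φ N (φ r • f.hom x) (1 : A) = r • g.hom x
    rw [map_smul_left]
    exact g.hom.map_smul r x

/-- The complexes `Hom_A(K, Hom_R(A, N))` and `Hom_R(K, N)` of `R`-modules are isomorphic. -/
noncomputable def linearYonedaObjCoextendScalarsIso {α : Type*} [AddRightCancelSemigroup α]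
    [One α] (K : ChainComplex (ModuleCat.{u} A) α) (N : ModuleCat.{u} R) :
    ((restrictScalars φ).mapHomologicalComplex _).obj
        (K.linearYonedaObj A ((coextendScalars φ).obj N)) ≅
      ChainComplex.linearYonedaObj (((restrictScalars φ).mapHomologicalComplex _).obj K) R N :=
  HomologicalComplex.Hom.isoOfComponents
    (fun i ↦ (homCoextendScalarsLinearEquiv φ (K.X i) N).toModuleIso)
    fun i j _ ↦ by
      ext f
      exact ((restrictCoextendScalarsAdj.{u} φ).homEquiv_naturality_left_symm (K.d j i) f).symm

variable [(restrictScalars.{u} φ).PreservesProjectiveObjects] (n : ℕ) (M : ModuleCat.{u} A)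
  (N : ModuleCat.{u} R)

/-- The Eckmann–Shapiro isomorphism `Ext_A^n(M, Hom_R(A, N)) ≅ Ext_R^n(M, N)` of `R`-modules. -/
noncomputable def extCoextendScalarsIso :
    (restrictScalars φ).obj
        (((Ext A (ModuleCat.{u} A) n).obj (.op M)).obj ((coextendScalars φ).obj N)) ≅
      ((Ext R (ModuleCat.{u} R) n).obj (.op ((restrictScalars φ).obj M))).obj N :=
  let F := restrictScalars.{u} φ
  let Q := ProjectiveResolution.of M
  let K := Q.complex.linearYonedaObj A ((coextendScalars φ).obj N)
  F.mapIso (Q.isoExt n _) ≪≫ ((K.sc n).mapHomologyIso F).symm ≪≫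
    (HomologicalComplex.homologyFunctor _ _ n).mapIso
      (linearYonedaObjCoextendScalarsIso φ Q.complex N) ≪≫
    ((F.mapProjectiveResolution Q).isoExt (R := R) n N).symm

lemma annihilator_ext_restrictScalars :
    Module.annihilator R
        (((Ext R (ModuleCat.{u} R) n).obj (.op ((restrictScalars φ).obj M))).obj N) =
      (Module.annihilator A
        (((Ext A (ModuleCat.{u} A) n).obj (.op M)).obj ((coextendScalars φ).obj N))).comap φ := by
  rw [← (extCoextendScalarsIso φ n M N).toLinearEquiv.annihilator_eq]
  ext r
  simp only [Ideal.mem_comap, Module.mem_annihilator]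
  rfl

end CommRing

end ChangeOfRings

theorem stmt17_general {R A : Type u} [CommRing R] [CommRing A] [Algebra R A]
    [Module.Projective R A] (n : ℕ) (S : Set R)
    (P : Type u) [AddCommGroup P] [Module A P] [Module R P] [IsScalarTower R A P]
    (h : ∀ N : ModuleCat.{u} A, ∃ s ∈ S,
      ∀ x : ((Ext A (ModuleCat.{u} A) n).obj (Opposite.op (ModuleCat.of A P))).obj N,
        algebraMap R A s • x = 0) :
    ∀ N : ModuleCat.{u} R, ∃ s ∈ S,
      ∀ x : ((Ext R (ModuleCat.{u} R) n).obj (Opposite.op (ModuleCat.of R P))).obj N,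
        s • x = 0 := by
  intro N
  have := preservesProjectiveObjects_restrictScalars_algebraMap.{u, u, u} R A
  obtain ⟨s, hs, hN⟩ := h ((ModuleCat.coextendScalars (algebraMap R A)).obj N)
  refine ⟨s, hs, Module.mem_annihilator.1 ?_⟩
  let e := ((Ext R (ModuleCat.{u} R) n).mapIso (restrictScalarsAlgebraMapIso R A P).op).app N
  rw [e.toLinearEquiv.annihilator_eq, annihilator_ext_restrictScalars]
  exact Module.mem_annihilator.2 hN

/-- If an `R[x]`-module `P` is `S`-projective over `R[x]` (where `S ⊆ R` is viewed in `R[x]`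
via the constant embedding), then `P` is `S`-projective over `R` by restriction of scalars. -/
theorem stmt17 {R : Type u} [CommRing R] (S : Submonoid R)
    (P : Type u) [AddCommGroup P] [Module (Polynomial R) P] [Module R P]
    [IsScalarTower R (Polynomial R) P]
    (h : ∀ N : ModuleCat.{u} (Polynomial R), ∃ s ∈ S,
      ∀ x : ((Ext (Polynomial R) (ModuleCat.{u} (Polynomial R)) 1).obj
          (Opposite.op (ModuleCat.of (Polynomial R) P))).obj N,
        (Polynomial.C s : Polynomial R) • x = 0) :
    ∀ N : ModuleCat.{u} R, ∃ s ∈ S,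
      ∀ x : ((Ext R (ModuleCat.{u} R) 1).obj (Opposite.op (ModuleCat.of R P))).obj N,
        s • x = 0 :=
  stmt17_general (A := Polynomial R) 1 (S : Set R) P h
end
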